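/- Let m ≥ 1 and let v_r, v₃ be axially symmetric functions, twice continuously differentiable on a neighborhood of the closure of D_m, satisfying the divergence-free condition ∂_r v_r + v_r/r + ∂_{x₃} v₃ = 0 in D_m, with v_r = 0 on ∂^V D_m and v₃ = 0 on ∂^H D_m. Then 2 ∫_{D_m} |∂_{x₃} v_r + ∂_r v₃|² dx + 4 ∫_{D_m} ( |∂_r v_r|² + v_r²/r² ) dx + 4 ∫_{D_m} |∂_{x₃} v₃|² dx = 2 ∫_{D_m} ( |∇v_r|² + v_r²/r² + |∇v₃|² ) dx. -/

import Mathlib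

noncomputable section

open Real MeasureTheory Set

/-- Inner radius of the `j`-th rectangle: `r_j = 2^(-j)`. -/
def rW (j : ℕ) : ℝ := (2 : ℝ) ^ (-(j : ℝ))

/-- Height of the `j`-th rectangle: `h_j = 2^(-β (j-1))`. -/
def hH (β : ℝ) (j : ℕ) : ℝ := (2 : ℝ) ^ (-β * ((j : ℝ) - 1))

/-- The rectangle `S_j` in the `(r, x₃)` cross-section. -/
def Srect (β : ℝ) (j : ℕ) : Set (ℝ × ℝ) :=
  {p : ℝ × ℝ | rW j ≤ p.1 ∧ p.1 < rW (j - 1) ∧ 0 < p.2 ∧ p.2 < hH β j}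

/-- The `(r, x₃)` cross-section of the domain `D_m`. -/
def Ddom (β : ℝ) (m : ℕ) : Set (ℝ × ℝ) := ⋃ j ∈ Finset.Icc 1 m, Srect β j

/-- The horizontal part `∂^H D_m` of the boundary of `D_m` (where `x₃` is locally constant). -/
def bdH (β : ℝ) (m : ℕ) : Set (ℝ × ℝ) :=
  {p : ℝ × ℝ | p.2 = 0 ∧ rW m ≤ p.1 ∧ p.1 ≤ 1} ∪
    ⋃ j ∈ Finset.Icc 1 m,
      {p : ℝ × ℝ | p.2 = hH β j ∧ rW j ≤ p.1 ∧ p.1 ≤ rW (j - 1)}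

/-- The vertical part `∂^V D_m` of the boundary of `D_m` (where `r` is locally constant). -/
def bdV (β : ℝ) (m : ℕ) : Set (ℝ × ℝ) :=
  {p : ℝ × ℝ | p.1 = 1 ∧ 0 ≤ p.2 ∧ p.2 ≤ 1} ∪
    {p : ℝ × ℝ | p.1 = rW m ∧ 0 ≤ p.2 ∧ p.2 ≤ hH β m} ∪
    ⋃ j ∈ Finset.Icc 1 (m - 1),
      {p : ℝ × ℝ | p.1 = rW j ∧ hH β (j + 1) ≤ p.2 ∧ p.2 ≤ hH β j}

/-- The full boundary `∂ D_m` of `D_m`. -/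
def bdD (β : ℝ) (m : ℕ) : Set (ℝ × ℝ) := bdH β m ∪ bdV β m

/-- The corner points of the polygonal cross-section of `D_m`
(i.e. the corner circles of the 3D domain). -/
def cornerSet (β : ℝ) (m : ℕ) : Set (ℝ × ℝ) :=
  ({(rW m, 0), ((1 : ℝ), 0), ((1 : ℝ), (1 : ℝ)), (rW m, hH β m)} : Set (ℝ × ℝ)) ∪
    ⋃ j ∈ Finset.Icc 1 (m - 1),
      ({(rW j, hH β j), (rW j, hH β (j + 1))} : Set (ℝ × ℝ))

/-- Radial partial derivative `∂_r`. -/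
def pdr (F : ℝ × ℝ → ℝ) (p : ℝ × ℝ) : ℝ := deriv (fun r => F (r, p.2)) p.1

/-- Vertical partial derivative `∂_{x₃}`. -/
def pdz (F : ℝ × ℝ → ℝ) (p : ℝ × ℝ) : ℝ := deriv (fun z => F (p.1, z)) p.2

/-- The axially symmetric Laplacian `Δ = ∂_r² + (1/r) ∂_r + ∂_{x₃}²`. -/
def cylLap (F : ℝ × ℝ → ℝ) (p : ℝ × ℝ) : ℝ :=
  pdr (pdr F) p + (1 / p.1) * pdr F p + pdz (pdz F) p

/-- The integral of an axially symmetric function over the 3-dimensional domain `D_m`,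
computed in the cross-section: `∫_{D_m} f dx = 2π ∬ F r dr dx₃`. -/
def cylIntegral (β : ℝ) (m : ℕ) (F : ℝ × ℝ → ℝ) : ℝ :=
  ∫ p in Ddom β m, F p * (2 * π * p.1)

/-- The vertical cross-section segment `D_m ∩ {r = c}` of the cross-section. -/
def vertSeg (β : ℝ) (m : ℕ) (c : ℝ) : Set ℝ := {z : ℝ | (c, z) ∈ Ddom β m}

theorem aux_pdr_eq {f : ℝ × ℝ → ℝ} {p : ℝ × ℝ} (h : DifferentiableAt ℝ f p) :
    HasDerivAt (fun r => f (r, p.2)) (fderiv ℝ f p (1, 0)) p.1 := by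
  have h1 : HasDerivAt (fun r : ℝ => ((r, p.2) : ℝ × ℝ)) (1, 0) p.1 :=
    (hasDerivAt_id p.1).prodMk (hasDerivAt_const p.1 p.2)
  exact HasFDerivAt.comp_hasDerivAt (f := fun r : ℝ => ((r, p.2) : ℝ × ℝ)) p.1
    (h.hasFDerivAt) h1

theorem aux_pdz_eq {f : ℝ × ℝ → ℝ} {p : ℝ × ℝ} (h : DifferentiableAt ℝ f p) :
    HasDerivAt (fun z => f (p.1, z)) (fderiv ℝ f p (0, 1)) p.2 := by
  have h1 : HasDerivAt (fun z : ℝ => ((p.1, z) : ℝ × ℝ)) (0, 1) p.2 :=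
    (hasDerivAt_const p.2 p.1).prodMk (hasDerivAt_id p.2)
  exact HasFDerivAt.comp_hasDerivAt (f := fun z : ℝ => ((p.1, z) : ℝ × ℝ)) p.2
    (h.hasFDerivAt) h1

theorem aux_pdr {f : ℝ × ℝ → ℝ} {p : ℝ × ℝ} (h : DifferentiableAt ℝ f p) :
    pdr f p = fderiv ℝ f p (1, 0) := (aux_pdr_eq h).deriv

theorem aux_pdz {f : ℝ × ℝ → ℝ} {p : ℝ × ℝ} (h : DifferentiableAt ℝ f p) :
    pdz f p = fderiv ℝ f p (0, 1) := (aux_pdz_eq h).deriv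

theorem aux_diffAt {f : ℝ × ℝ → ℝ} {V : Set (ℝ × ℝ)} {n : ℕ∞} (hV : IsOpen V)
    (hf : ContDiffOn ℝ n f V) (hn : 1 ≤ n) {p : ℝ × ℝ} (hp : p ∈ V) : DifferentiableAt ℝ f p :=
  (hf.contDiffAt (hV.mem_nhds hp)).differentiableAt (by
    intro h
    have : n = 0 := by exact_mod_cast h
    subst this
    simp at hn)

theorem aux_pdr_smooth {f : ℝ × ℝ → ℝ} {V : Set (ℝ × ℝ)} (hV : IsOpen V)
    (hf : ContDiffOn ℝ 2 f V) : ContDiffOn ℝ 1 (pdr f) V := by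
  have h1 : ContDiffOn ℝ 1 (fderiv ℝ f) V := hf.fderiv_of_isOpen hV (by norm_num)
  have h2 : ContDiffOn ℝ 1 (fun p => fderiv ℝ f p (1, 0)) V := h1.clm_apply contDiffOn_const
  exact h2.congr fun p hp => aux_pdr (aux_diffAt (n := 2) hV hf (by norm_num) hp)

theorem aux_pdz_smooth {f : ℝ × ℝ → ℝ} {V : Set (ℝ × ℝ)} (hV : IsOpen V)
    (hf : ContDiffOn ℝ 2 f V) : ContDiffOn ℝ 1 (pdz f) V := by
  have h1 : ContDiffOn ℝ 1 (fderiv ℝ f) V := hf.fderiv_of_isOpen hV (by norm_num)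
  have h2 : ContDiffOn ℝ 1 (fun p => fderiv ℝ f p (0, 1)) V := h1.clm_apply contDiffOn_const
  exact h2.congr fun p hp => aux_pdz (aux_diffAt (n := 2) hV hf (by norm_num) hp)

theorem aux_symm {f : ℝ × ℝ → ℝ} {V : Set (ℝ × ℝ)} (hV : IsOpen V)
    (hf : ContDiffOn ℝ 2 f V) {p : ℝ × ℝ} (hp : p ∈ V) :
    fderiv ℝ (pdr f) p (0, 1) = fderiv ℝ (pdz f) p (1, 0) := by
  have h1 : ContDiffOn ℝ 1 (fderiv ℝ f) V := hf.fderiv_of_isOpen hV (by norm_num)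
  have hd : DifferentiableAt ℝ (fderiv ℝ f) p :=
    (h1.contDiffAt (hV.mem_nhds hp)).differentiableAt (by norm_num)
  have e1 : pdr f =ᶠ[nhds p] fun q => fderiv ℝ f q (1, 0) := by
    filter_upwards [hV.mem_nhds hp] with q hq
    exact aux_pdr (aux_diffAt (n := 2) hV hf (by norm_num) hq)
  have e2 : pdz f =ᶠ[nhds p] fun q => fderiv ℝ f q (0, 1) := by
    filter_upwards [hV.mem_nhds hp] with q hq
    exact aux_pdz (aux_diffAt (n := 2) hV hf (by norm_num) hq)
  have hs := (hf.contDiffAt (hV.mem_nhds hp)).isSymmSndFDerivAt (by simp)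
  rw [e1.fderiv_eq, e2.fderiv_eq, fderiv_clm_apply hd (differentiableAt_const _),
    fderiv_clm_apply hd (differentiableAt_const _)]
  simpa using hs (0, 1) (1, 0)

theorem rW_pos (j : ℕ) : 0 < rW j := by unfold rW; positivity
theorem hH_pos (β : ℝ) (j : ℕ) : 0 < hH β j := by unfold hH; positivity
theorem rW_anti {i j : ℕ} (h : i ≤ j) : rW j ≤ rW i := by
  unfold rW
  apply Real.rpow_le_rpow_of_exponent_le (by norm_num)
  have : (i : ℝ) ≤ j := by exact_mod_cast h
  linarith
theorem rW_lt {i j : ℕ} (h : i < j) : rW j < rW i := by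
  unfold rW
  apply Real.rpow_lt_rpow_of_exponent_lt (by norm_num)
  have : (i : ℝ) < j := by exact_mod_cast h
  linarith
theorem rW_zero : rW 0 = 1 := by simp [rW]
theorem hH_one (β : ℝ) : hH β 1 = 1 := by simp [hH]
theorem hH_anti {β : ℝ} (hβ : 1 < β) {i j : ℕ} (h : i ≤ j) : hH β j ≤ hH β i := by
  unfold hH
  apply Real.rpow_le_rpow_of_exponent_le (by norm_num)
  have : (i : ℝ) ≤ j := by exact_mod_cast h
  nlinarith

theorem Srect_eq (β : ℝ) (j : ℕ) :
    Srect β j = Ico (rW j) (rW (j - 1)) ×ˢ Ioo 0 (hH β j) := by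
  ext p; simp [Srect, and_assoc]

theorem Srect_meas (β : ℝ) (j : ℕ) : MeasurableSet (Srect β j) := by
  rw [Srect_eq]; exact measurableSet_Ico.prod measurableSet_Ioo

theorem Srect_ae (β : ℝ) (j : ℕ) :
    Srect β j =ᵐ[volume] Icc ((rW j, 0) : ℝ × ℝ) (rW (j - 1), hH β j) := by
  rw [Srect_eq, ← Icc_prod_Icc]
  exact Measure.set_prod_ae_eq Ico_ae_eq_Icc Ioo_ae_eq_Icc

theorem Srect_closure (β : ℝ) {j : ℕ} (hj : 1 ≤ j) :
    closure (Srect β j) = Icc ((rW j, 0) : ℝ × ℝ) (rW (j - 1), hH β j) := by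
  rw [Srect_eq, closure_prod_eq, closure_Ico (rW_lt (by omega)).ne,
    closure_Ioo (hH_pos β j).ne, Icc_prod_Icc]

theorem Srect_sub (β : ℝ) {m j : ℕ} (h : j ∈ Finset.Icc 1 m) : Srect β j ⊆ Ddom β m :=
  fun p hp => by
    unfold Ddom
    exact mem_biUnion (by simpa using h) hp

theorem Icc_sub (β : ℝ) {m j : ℕ} (h : j ∈ Finset.Icc 1 m) :
    Icc ((rW j, 0) : ℝ × ℝ) (rW (j - 1), hH β j) ⊆ closure (Ddom β m) := by
  rw [← Srect_closure β (Finset.mem_Icc.1 h).1]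
  exact closure_mono (Srect_sub β h)

theorem Ddom_sub {β : ℝ} (hβ : 1 < β) (m : ℕ) :
    Ddom β m ⊆ Icc ((rW m, 0) : ℝ × ℝ) (1, 1) := by
  intro p hp
  simp only [Ddom, mem_iUnion, Finset.mem_Icc, exists_prop] at hp
  obtain ⟨j, ⟨h1, h2⟩, a, b, c, d⟩ := hp
  have e1 := rW_anti h2
  have e2 := rW_anti (Nat.zero_le (j - 1))
  have e3 := hH_anti hβ h1
  rw [rW_zero] at e2
  rw [hH_one] at e3
  exact ⟨⟨by simp; linarith, c.le⟩, ⟨by simp; linarith, by simp; linarith⟩⟩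

theorem Dcl_sub {β : ℝ} (hβ : 1 < β) (m : ℕ) :
    closure (Ddom β m) ⊆ Icc ((rW m, 0) : ℝ × ℝ) (1, 1) :=
  closure_minimal (Ddom_sub hβ m) isClosed_Icc

theorem Dcl_compact {β : ℝ} (hβ : 1 < β) (m : ℕ) : IsCompact (closure (Ddom β m)) :=
  isCompact_Icc.of_isClosed_subset isClosed_closure (Dcl_sub hβ m)

theorem Ddom_meas (β : ℝ) (m : ℕ) : MeasurableSet (Ddom β m) :=
  Finset.measurableSet_biUnion _ fun j _ => Srect_meas β j

theorem Srect_disj (β : ℝ) (m : ℕ) :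
    Set.Pairwise (↑(Finset.Icc 1 m)) (Function.onFun Disjoint (Srect β)) := by
  have key : ∀ i j : ℕ, i < j → Disjoint (Srect β i) (Srect β j) := by
    intro i j hij
    rw [Set.disjoint_left]
    rintro p ⟨a, -⟩ ⟨-, b, -⟩
    have := rW_anti (show i ≤ j - 1 by omega)
    linarith
  intro i _ j _ hij
  rcases lt_or_gt_of_ne hij with h | h
  · exact key i j h
  · exact (key j i h).symm

theorem aux_int {β : ℝ} (hβ : 1 < β) (m : ℕ) {f : ℝ × ℝ → ℝ}
    (hf : ContinuousOn f (closure (Ddom β m))) : IntegrableOn f (Ddom β m) :=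
  (hf.integrableOn_compact (Dcl_compact hβ m)).mono_set subset_closure

theorem aux_flux {β : ℝ} (hβ : 1 < β) {m : ℕ} (hm : 1 ≤ m) {V : Set (ℝ × ℝ)} (hV : IsOpen V)
    (hDV : closure (Ddom β m) ⊆ V) {F G : ℝ × ℝ → ℝ} (hF : ContDiffOn ℝ 1 F V)
    (hG : ContDiffOn ℝ 1 G V) (hF0 : ∀ p ∈ bdV β m, F p = 0)
    (hG0 : ∀ j ∈ Finset.Icc 1 m, ∀ x ∈ Ioo (rW j) (rW (j - 1)),
      G (x, 0) = 0 ∧ G (x, hH β j) = 0) :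
    ∫ p in Ddom β m, (fderiv ℝ F p (1, 0) + fderiv ℝ G p (0, 1)) = 0 := by
  have hc : ContinuousOn (fun p => fderiv ℝ F p (1, 0) + fderiv ℝ G p (0, 1)) V :=
    ((hF.continuousOn_fderiv_of_isOpen hV (by norm_num)).clm_apply continuousOn_const).add
      ((hG.continuousOn_fderiv_of_isOpen hV (by norm_num)).clm_apply continuousOn_const)
  have hint := aux_int hβ m (hc.mono hDV)
  have hrect : ∀ j ∈ Finset.Icc 1 m,
      ∫ p in Srect β j, (fderiv ℝ F p (1, 0) + fderiv ℝ G p (0, 1)) =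
        (∫ z in (0:ℝ)..hH β j, F (rW (j - 1), z)) - ∫ z in (0:ℝ)..hH β j, F (rW j, z) := by
    intro j hj
    have hj1 := (Finset.mem_Icc.1 hj).1
    have hsub := (Icc_sub β hj).trans hDV
    have hlt : rW j < rW (j - 1) := rW_lt (by omega)
    have hin : ∀ x ∈ Ioo (rW j) (rW (j - 1)) ×ˢ Ioo 0 (hH β j), x ∈ V := by
      intro x hx
      apply hsub
      rw [← Icc_prod_Icc]
      exact ⟨Ioo_subset_Icc_self hx.1, Ioo_subset_Icc_self hx.2⟩
    rw [setIntegral_congr_set (Srect_ae β j),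
      integral_divergence_prod_Icc_of_hasFDerivAt_of_le F G (fderiv ℝ F) (fderiv ℝ G)
        (rW j, 0) (rW (j - 1), hH β j) ⟨hlt.le, (hH_pos β j).le⟩
        (hF.continuousOn.mono hsub) (hG.continuousOn.mono hsub)
        (fun x hx => (aux_diffAt (n := 1) hV hF le_rfl (hin x hx)).hasFDerivAt)
        (fun x hx => (aux_diffAt (n := 1) hV hG le_rfl (hin x hx)).hasFDerivAt)
        ((hc.mono hsub).integrableOn_compact isCompact_Icc)]
    have z1 : ∫ x in (rW j)..(rW (j - 1)), G (x, hH β j) = 0 := by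
      rw [intervalIntegral.integral_of_le hlt.le, integral_Ioc_eq_integral_Ioo]
      exact setIntegral_eq_zero_of_forall_eq_zero fun x hx => (hG0 j hj x hx).2
    have z2 : ∫ x in (rW j)..(rW (j - 1)), G (x, 0) = 0 := by
      rw [intervalIntegral.integral_of_le hlt.le, integral_Ioc_eq_integral_Ioo]
      exact setIntegral_eq_zero_of_forall_eq_zero fun x hx => (hG0 j hj x hx).1
    simp only [z1, z2]
    ring
  have hsum : ∀ k : ℕ, 1 ≤ k → k ≤ m →
      ∑ j ∈ Finset.Icc 1 k, (∫ p in Srect β j, (fderiv ℝ F p (1, 0) + fderiv ℝ G p (0, 1))) =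
        - ∫ z in (0:ℝ)..hH β k, F (rW k, z) := by
    intro k hk
    induction k, hk using Nat.le_induction with
    | base =>
      intro _
      rw [Finset.Icc_self, Finset.sum_singleton, hrect 1 (by simp [hm])]
      have : ∫ z in (0:ℝ)..hH β 1, F (rW (1 - 1), z) = 0 := by
        apply intervalIntegral.integral_zero_ae
        refine Filter.Eventually.of_forall fun z hz => hF0 _ ?_
        rw [hH_one, uIoc_of_le zero_le_one] at hz
        left; left
        exact ⟨by simp [rW_zero], hz.1.le, hz.2⟩
      rw [this]; ring
    | succ k hk ih =>
      intro hkm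
      rw [Finset.sum_Icc_succ_top (by omega), ih (by omega),
        hrect (k + 1) (by simp; omega), Nat.add_sub_cancel]
      have hci : ∀ a b : ℝ, a ∈ Icc 0 (hH β k) → b ∈ Icc 0 (hH β k) →
          IntervalIntegrable (fun z => F (rW k, z)) volume a b := by
        intro a b ha hb
        apply ContinuousOn.intervalIntegrable
        have : ContinuousOn (fun z : ℝ => ((rW k, z) : ℝ × ℝ)) (uIcc a b) := by fun_prop
        refine hF.continuousOn.comp this fun z hz => ?_
        apply hDV
        apply Icc_sub β (show k ∈ Finset.Icc 1 m by simp; omega)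
        have := (uIcc_subset_Icc ha hb) hz
        exact ⟨⟨le_rfl, this.1⟩, ⟨rW_anti (by omega), this.2⟩⟩
      have hh := hH_anti hβ (show k ≤ k + 1 by omega)
      have e := intervalIntegral.integral_add_adjacent_intervals
        (hci 0 (hH β (k+1)) ⟨le_rfl, (hH_pos β k).le⟩ ⟨(hH_pos β _).le, hh⟩)
        (hci (hH β (k+1)) (hH β k) ⟨(hH_pos β _).le, hh⟩ ⟨(hH_pos β k).le, le_rfl⟩)
      have z : ∫ z in (hH β (k+1))..hH β k, F (rW k, z) = 0 := by
        apply intervalIntegral.integral_zero_ae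
        refine Filter.Eventually.of_forall fun z hz => hF0 _ ?_
        rw [uIoc_of_le hh] at hz
        right
        exact mem_biUnion (show k ∈ (Finset.Icc 1 (m-1)) by simp; omega) ⟨rfl, hz.1.le, hz.2⟩
      rw [← e, z]; ring
  have hD : ∫ p in Ddom β m, (fderiv ℝ F p (1, 0) + fderiv ℝ G p (0, 1)) =
      ∑ j ∈ Finset.Icc 1 m, (∫ p in Srect β j, (fderiv ℝ F p (1, 0) + fderiv ℝ G p (0, 1))) :=
    integral_biUnion_finset _ (fun j _ => Srect_meas β j) (Srect_disj β m)
      (fun j hj => hint.mono_set (Srect_sub β hj))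
  rw [hD, hsum m hm le_rfl, neg_eq_zero]
  apply intervalIntegral.integral_zero_ae
  refine Filter.Eventually.of_forall fun z hz => hF0 _ ?_
  rw [uIoc_of_le (hH_pos β m).le] at hz
  left; right
  exact ⟨rfl, hz.1.le, hz.2⟩

/-- Identity between the strain-type quantities and the full gradient
for a divergence-free axially symmetric field `(v_r, v₃)`. -/
theorem strain_gradient_identity (β : ℝ) (hβ : 1 < β) (hβ' : β ≤ 1.1)
    (m : ℕ) (hm : 1 ≤ m) (vr v3 : ℝ × ℝ → ℝ)
    (hvr : ∃ U : Set (ℝ × ℝ), IsOpen U ∧ closure (Ddom β m) ⊆ U ∧ ContDiffOn ℝ 2 vr U)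
    (hv3 : ∃ U : Set (ℝ × ℝ), IsOpen U ∧ closure (Ddom β m) ⊆ U ∧ ContDiffOn ℝ 2 v3 U)
    (hdiv : ∀ p ∈ Ddom β m, pdr vr p + vr p / p.1 + pdz v3 p = 0)
    (hvrV : ∀ p ∈ bdV β m, vr p = 0)
    (hv3H : ∀ p ∈ bdH β m, v3 p = 0) :
    2 * (cylIntegral β m fun p => (pdz vr p + pdr v3 p) ^ 2)
        + 4 * (cylIntegral β m fun p => (pdr vr p) ^ 2 + (vr p) ^ 2 / p.1 ^ 2)
        + 4 * (cylIntegral β m fun p => (pdz v3 p) ^ 2)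
      = 2 * cylIntegral β m
          (fun p => ((pdr vr p) ^ 2 + (pdz vr p) ^ 2) + (vr p) ^ 2 / p.1 ^ 2
            + ((pdr v3 p) ^ 2 + (pdz v3 p) ^ 2)) := by
  obtain ⟨U1, hU1, hD1, hf1⟩ := hvr
  obtain ⟨U2, hU2, hD2, hf2⟩ := hv3
  obtain ⟨V, hV, hDV, hf, hg⟩ : ∃ V : Set (ℝ × ℝ), IsOpen V ∧ closure (Ddom β m) ⊆ V ∧
      ContDiffOn ℝ 2 vr V ∧ ContDiffOn ℝ 2 v3 V :=
    ⟨U1 ∩ U2, hU1.inter hU2, subset_inter hD1 hD2, hf1.mono inter_subset_left,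
      hf2.mono inter_subset_right⟩
  have hrpos : ∀ p ∈ closure (Ddom β m), 0 < p.1 := fun p hp =>
    (rW_pos m).trans_le (Dcl_sub hβ m hp).1.1
  have hfr := aux_pdr_smooth hV hf
  have hfz := aux_pdz_smooth hV hf
  have hgr := aux_pdr_smooth hV hg
  have hgz := aux_pdz_smooth hV hg
  have hf' : ContDiffOn ℝ 1 vr V := hf.of_le (by norm_num)
  have hg' : ContDiffOn ℝ 1 v3 V := hg.of_le (by norm_num)
  have hF : ContDiffOn ℝ 1 (fun p : ℝ × ℝ => p.1 * vr p * pdz v3 p + vr p ^ 2 / 2) V :=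
    ((contDiffOn_fst.mul hf').mul hgz).add ((hf'.pow 2).div_const 2)
  have hG : ContDiffOn ℝ 1 (fun p : ℝ × ℝ => -(p.1 * vr p * pdr v3 p)) V :=
    ((contDiffOn_fst.mul hf').mul hgr).neg
  have hflux := aux_flux hβ hm hV hDV hF hG
    (by intro p hp; simp [hvrV p hp])
    (by
      intro j hj x hx
      have hj' := Finset.mem_Icc.1 hj
      have key : ∀ c : ℝ, (∀ y ∈ Ioo (rW j) (rW (j - 1)), v3 (y, c) = 0) → pdr v3 (x, c) = 0 := by
        intro c hc
        have : (fun r => v3 (r, c)) =ᶠ[nhds x] fun _ => 0 := by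
          filter_upwards [isOpen_Ioo.mem_nhds hx] with y hy using hc y hy
        simp [pdr, this.deriv_eq]
      constructor
      · have := key 0 (by
          intro y hy
          apply hv3H
          left
          have h1 := rW_anti hj'.2
          have h2 := rW_anti (Nat.zero_le (j - 1))
          rw [rW_zero] at h2
          exact ⟨rfl, by simpa using h1.trans hy.1.le, by simpa using hy.2.le.trans h2⟩)
        simp [this]
      · have := key (hH β j) (by
          intro y hy
          apply hv3H
          right
          exact mem_biUnion (by simpa using hj) ⟨rfl, hy.1.le, hy.2.le⟩)
        simp [this])
  -- continuity and integrability
  have c0 : ContinuousOn vr (closure (Ddom β m)) := hf.continuousOn.mono hDV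
  have c1 := hfr.continuousOn.mono hDV
  have c2 := hfz.continuousOn.mono hDV
  have c3 := hgr.continuousOn.mono hDV
  have c4 := hgz.continuousOn.mono hDV
  have cr : ContinuousOn (fun p : ℝ × ℝ => p.1) (closure (Ddom β m)) := continuousOn_fst
  have cw : ContinuousOn (fun p : ℝ × ℝ => 2 * π * p.1) (closure (Ddom β m)) :=
    continuousOn_const.mul cr
  have cq : ContinuousOn (fun p : ℝ × ℝ => vr p ^ 2 / p.1 ^ 2) (closure (Ddom β m)) :=
    (c0.pow 2).div (cr.pow 2) fun p hp => pow_ne_zero 2 (hrpos p hp).ne'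
  have i1 : IntegrableOn (fun p : ℝ × ℝ => ((pdz vr p + pdr v3 p) ^ 2) * (2 * π * p.1)) (Ddom β m) := aux_int hβ m (((c2.add c3).pow 2).mul cw)
  have i2 : IntegrableOn (fun p : ℝ × ℝ => (pdr vr p ^ 2 + vr p ^ 2 / p.1 ^ 2) * (2 * π * p.1)) (Ddom β m) := aux_int hβ m (((c1.pow 2).add cq).mul cw)
  have i3 : IntegrableOn (fun p : ℝ × ℝ => (pdz v3 p ^ 2) * (2 * π * p.1)) (Ddom β m) := aux_int hβ m ((c4.pow 2).mul cw)
  have i4 : IntegrableOn (fun p : ℝ × ℝ => ((pdr vr p ^ 2 + pdz vr p ^ 2) + vr p ^ 2 / p.1 ^ 2 + (pdr v3 p ^ 2 + pdz v3 p ^ 2)) * (2 * π * p.1)) (Ddom β m) := aux_int hβ m (((((c1.pow 2).add (c2.pow 2)).add cq).add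
    ((c3.pow 2).add (c4.pow 2))).mul cw)
  rw [← sub_eq_zero]
  unfold cylIntegral
  have lin : ∀ f1 f2 f3 f4 : ℝ × ℝ → ℝ, IntegrableOn f1 (Ddom β m) → IntegrableOn f2 (Ddom β m) →
      IntegrableOn f3 (Ddom β m) → IntegrableOn f4 (Ddom β m) →
      2 * (∫ p in Ddom β m, f1 p) + 4 * (∫ p in Ddom β m, f2 p) + 4 * (∫ p in Ddom β m, f3 p)
        - 2 * (∫ p in Ddom β m, f4 p)
        = ∫ p in Ddom β m, (2 * f1 p + 4 * f2 p + 4 * f3 p - 2 * f4 p) := by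
    intro f1 f2 f3 f4 i1 i2 i3 i4
    have j1 : IntegrableOn (fun p => 2 * f1 p + 4 * f2 p) (Ddom β m) :=
      (i1.const_mul 2).add (i2.const_mul 4)
    have j2 : IntegrableOn (fun p => 2 * f1 p + 4 * f2 p + 4 * f3 p) (Ddom β m) :=
      j1.add (i3.const_mul 4)
    rw [integral_sub j2 (i4.const_mul 2), integral_add j1 (i3.const_mul 4),
      integral_add (i1.const_mul 2) (i2.const_mul 4)]
    simp only [integral_const_mul]
  rw [lin _ _ _ _ i1 i2 i3 i4]
  have hfin : ∫ p in Ddom β m, (-(8 * π)) * (fderiv ℝ (fun p : ℝ × ℝ =>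
      p.1 * vr p * pdz v3 p + vr p ^ 2 / 2) p (1, 0)
      + fderiv ℝ (fun p : ℝ × ℝ => -(p.1 * vr p * pdr v3 p)) p (0, 1)) = 0 := by
    rw [integral_const_mul, hflux, mul_zero]
  rw [← hfin]
  refine setIntegral_congr_fun (Ddom_meas β m) fun p hp => ?_
  have hpc := subset_closure hp
  have hpV := hDV hpc
  have hp0 := (hrpos p hpc).ne'
  have dvr := aux_diffAt (n := 1) hV hf' le_rfl hpV
  have dv3 := aux_diffAt (n := 1) hV hg' le_rfl hpV
  have dgz := aux_diffAt (n := 1) hV hgz le_rfl hpV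
  have dgr := aux_diffAt (n := 1) hV hgr le_rfl hpV
  have eF : fderiv ℝ (fun p : ℝ × ℝ => p.1 * vr p * pdz v3 p + vr p ^ 2 / 2) p (1, 0) =
      (vr p + p.1 * pdr vr p) * pdz v3 p + p.1 * vr p * fderiv ℝ (pdz v3) p (1, 0)
        + vr p * pdr vr p := by
    have a1 := aux_pdr_eq (aux_diffAt (n := 1) hV hF le_rfl hpV)
    have a2 := (((hasDerivAt_id p.1).mul (aux_pdr_eq dvr)).mul (aux_pdr_eq dgz)).add
      (((aux_pdr_eq dvr).pow 2).div_const 2)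
    rw [a1.unique a2, aux_pdr dvr]
    simp
    ring
  have eG : fderiv ℝ (fun p : ℝ × ℝ => -(p.1 * vr p * pdr v3 p)) p (0, 1) =
      -(p.1 * pdz vr p * pdr v3 p + p.1 * vr p * fderiv ℝ (pdz v3) p (1, 0)) := by
    have a1 := aux_pdz_eq (aux_diffAt (n := 1) hV hG le_rfl hpV)
    have a2 := (((hasDerivAt_const p.2 p.1).mul (aux_pdz_eq dvr)).mul (aux_pdz_eq dgr)).neg
    rw [a1.unique a2, aux_pdz dvr, aux_symm hV hg hpV]
    simp
  have hd := hdiv p hp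
  have hC : pdz v3 p = -(pdr vr p + vr p / p.1) := by linarith
  simp only [eF, eG]
  simp only [hC]
  field_simp
  ring
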